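/- Let L ≥ 3 be an integer, λ > 0, q := 2/L, and let M♮ ∈ ℝ^{m × n} with r := min{m,n}. Define the threshold τ := (1 − q/2)·λ^{1/(2−q)}·(1 − q)^{(q−1)/(2−q)}. If σ_i(M♮) ≠ τ for every i ∈ {1, …, r}, then the Schatten-regularized objective 𝓛_{M♮}(M) := ‖M♮ − M‖_F² + λ·‖M‖_{S^{2/L}}^{2/L} has exactly one global minimizer over ℝ^{m × n}. -/

import Mathlib

open Matrix

/-- The `i`-th largest singular value of a real matrix `A` (`0`-indexed),
i.e. the non-increasing rearrangement of the square roots of the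
eigenvalues of the positive semidefinite matrix `Aᵀ A`. -/
noncomputable def singularValue {m n : ℕ} (A : Matrix (Fin m) (Fin n) ℝ) (i : Fin (min m n)) : ℝ :=
  let ev : Fin n → ℝ := fun j => Real.sqrt ((Matrix.isHermitian_conjTranspose_mul_self A).eigenvalues j)
  (ev ∘ Tuple.sort ev) ((Fin.castLE (Nat.min_le_right m n) i).rev)

/-- Frobenius norm of a real matrix. -/
noncomputable def frobNorm {m n : ℕ} (A : Matrix (Fin m) (Fin n) ℝ) : ℝ :=
  Real.sqrt (∑ i, ∑ j, (A i j) ^ 2)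

/-- `‖A‖_{S^q}^q = ∑_{i=1}^{min m n} σ_i(A)^q`. -/
noncomputable def schattenPow {m n : ℕ} (A : Matrix (Fin m) (Fin n) ℝ) (q : ℝ) : ℝ :=
  ∑ i : Fin (min m n), (singularValue A i) ^ q

/-- Schatten-`q` quasi-norm `‖A‖_{S^q} = (∑ σ_i(A)^q)^{1/q}`. -/
noncomputable def schattenNorm {m n : ℕ} (A : Matrix (Fin m) (Fin n) ℝ) (q : ℝ) : ℝ :=
  (schattenPow A q) ^ (1 / q)

/-- `chainProd d W L = W_{L-1} * ⋯ * W_1 * W_0` (the end-to-end product of the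
first `L` layers, `W_i : ℝ^{d_{i+1} × d_i}`). -/
noncomputable def chainProd (d : ℕ → ℕ) (W : ∀ i : ℕ, Matrix (Fin (d (i + 1))) (Fin (d i)) ℝ) :
    (L : ℕ) → Matrix (Fin (d L)) (Fin (d 0)) ℝ
  | 0 => 1
  | (L + 1) => W L * chainProd d W L

/-- The ℓ²-regularized deep matrix factorization objective
`𝓛(W) = ‖M♮ − W_L ⋯ W_1‖_F² + (λ/L) ∑ᵢ ‖W_i‖_F²`. -/
noncomputable def deepLoss (L : ℕ) (lam : ℝ) (d : ℕ → ℕ)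
    (Mnat : Matrix (Fin (d L)) (Fin (d 0)) ℝ)
    (W : ∀ i : ℕ, Matrix (Fin (d (i + 1))) (Fin (d i)) ℝ) : ℝ :=
  frobNorm (Mnat - chainProd d W L) ^ 2 + (lam / L) * ∑ i : Fin L, frobNorm (W i.1) ^ 2

/-- The Schatten-regularized objective
`𝓛_{M♮}(M) = ‖M♮ − M‖_F² + λ‖M‖_{S^{2/L}}^{2/L}`. -/
noncomputable def schattenLoss (L : ℕ) (lam : ℝ) {m n : ℕ}
    (Mnat M : Matrix (Fin m) (Fin n) ℝ) : ℝ :=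
  frobNorm (Mnat - M) ^ 2 + lam * schattenPow M (2 / L)

/-!
Expand `‖Y - M‖_F²` in singular value decompositions `Y = ∑ sᵢ uᵢ vᵢᵀ`, `M = ∑ tⱼ aⱼ bⱼᵀ`. Up to a
nonnegative defect, the cross term is `∑ Pᵢⱼ (2 sᵢ tⱼ)`, where `Pᵢⱼ` is the mean of `⟨uᵢ, aⱼ⟩²` and
`⟨vᵢ, bⱼ⟩²`; by Bessel's inequality the rows and columns of `P` sum to at most `1`. Weak duality for
the assignment problem therefore bounds the objective from below by the sum of the minima over
`t ≥ 0` of the scalar problems `(sᵢ - t)² + ρ t`. If these have unique minimizers `xᵢ`, then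
complementary slackness forces every `M` attaining the bound to be `∑ xᵢ uᵢ vᵢᵀ`.

For `ρ t = λ t ^ q`, the scalar objective minus its value at `0` is
`t (t + λ t ^ (q - 1) - 2 s)`, and `2 τ` is the minimum of `t + λ t ^ (q - 1)`. So `0` is the strict
minimizer if `s < τ`, all minimizers are positive if `s > τ`, and there is only one of these because
the derivative of the objective is strictly convex.
-/

section Assignment

variable {ι κ : Type*} [Fintype ι] [Fintype κ] {P c : ι → κ → ℝ} {f : ι → ℝ} {g : κ → ℝ}

/-- A nonnegative array whose row and column sums are at most `1`: a feasible point of the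
(sub-)assignment problem. -/
structure IsDoublySubstochastic (P : ι → κ → ℝ) : Prop where
  nonneg : ∀ i j, 0 ≤ P i j
  row_sum_le : ∀ i, ∑ j, P i j ≤ 1
  col_sum_le : ∀ j, ∑ i, P i j ≤ 1

/-- `P` matches the nonzero entries of `x` with the nonzero entries of `t`, entries with equal
values being matched fractionally. -/
structure IsFractionalMatching (P : ι → κ → ℝ) (x : ι → ℝ) (t : κ → ℝ) : Prop where
  eq_of_ne_zero : ∀ i j, P i j ≠ 0 → x i = t j
  row_sum_eq : ∀ i, x i ≠ 0 → ∑ j, P i j = 1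
  col_sum_eq : ∀ j, t j ≠ 0 → ∑ i, P i j = 1

theorem IsFractionalMatching.sum_comp_eq {x : ι → ℝ} {t : κ → ℝ}
    (hP : IsFractionalMatching P x t) {ρ : ℝ → ℝ} (hρ : ρ 0 = 0) :
    ∑ i, ρ (x i) = ∑ j, ρ (t j) := by
  have hrow : ∀ i, ρ (x i) = ∑ j, P i j * ρ (x i) := fun i => by
    rw [← Finset.sum_mul]
    rcases eq_or_ne (x i) 0 with hi | hi
    · rw [hi, hρ, mul_zero]
    · rw [hP.row_sum_eq i hi, one_mul]
  have hcol : ∀ j, ρ (t j) = ∑ i, P i j * ρ (t j) := fun j => by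
    rw [← Finset.sum_mul]
    rcases eq_or_ne (t j) 0 with hj | hj
    · rw [hj, hρ, mul_zero]
    · rw [hP.col_sum_eq j hj, one_mul]
  have hmatch : ∀ i j, P i j * ρ (x i) = P i j * ρ (t j) := fun i j => by
    rcases eq_or_ne (P i j) 0 with hij | hij
    · rw [hij, zero_mul, zero_mul]
    · rw [hP.eq_of_ne_zero i j hij]
  calc ∑ i, ρ (x i) = ∑ i, ∑ j, P i j * ρ (x i) := Finset.sum_congr rfl fun i _ => hrow i
    _ = ∑ j, ∑ i, P i j * ρ (t j) := by
      simp only [hmatch]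
      exact Finset.sum_comm
    _ = ∑ j, ρ (t j) := Finset.sum_congr rfl fun j _ => (hcol j).symm

theorem assignment_duality_gap_eq (P c : ι → κ → ℝ) (f : ι → ℝ) (g : κ → ℝ) :
    ∑ i, f i + ∑ j, g j - ∑ i, ∑ j, P i j * c i j =
      ∑ i, ∑ j, P i j * (f i + g j - c i j) + ∑ i, (1 - ∑ j, P i j) * f i
        + ∑ j, (1 - ∑ i, P i j) * g j := by
  have hg : ∑ j, ∑ i, P i j * g j = ∑ i, ∑ j, P i j * g j := Finset.sum_comm
  simp only [mul_sub, mul_add, sub_mul, one_mul, Finset.sum_mul, Finset.sum_add_distrib,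
    Finset.sum_sub_distrib, hg]
  ring

namespace IsDoublySubstochastic

theorem sum_mul_le (hP : IsDoublySubstochastic P) (hf : ∀ i, 0 ≤ f i) (hg : ∀ j, 0 ≤ g j)
    (hc : ∀ i j, c i j ≤ f i + g j) :
    ∑ i, ∑ j, P i j * c i j ≤ ∑ i, f i + ∑ j, g j := by
  rw [← sub_nonneg, assignment_duality_gap_eq]
  exact add_nonneg (add_nonneg
    (Finset.sum_nonneg fun i _ => Finset.sum_nonneg fun j _ =>
      mul_nonneg (hP.nonneg i j) (sub_nonneg.2 (hc i j)))
    (Finset.sum_nonneg fun i _ => mul_nonneg (sub_nonneg.2 (hP.row_sum_le i)) (hf i)))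
    (Finset.sum_nonneg fun j _ => mul_nonneg (sub_nonneg.2 (hP.col_sum_le j)) (hg j))

theorem sum_mul_eq_iff (hP : IsDoublySubstochastic P) (hf : ∀ i, 0 ≤ f i) (hg : ∀ j, 0 ≤ g j)
    (hc : ∀ i j, c i j ≤ f i + g j) :
    ∑ i, ∑ j, P i j * c i j = ∑ i, f i + ∑ j, g j ↔
      (∀ i j, P i j ≠ 0 → c i j = f i + g j) ∧ (∀ i, f i ≠ 0 → ∑ j, P i j = 1) ∧
        ∀ j, g j ≠ 0 → ∑ i, P i j = 1 := by
  have hslack := fun i j => mul_nonneg (hP.nonneg i j) (sub_nonneg.2 (hc i j))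
  have hrow := fun i => mul_nonneg (sub_nonneg.2 (hP.row_sum_le i)) (hf i)
  have hcol := fun j => mul_nonneg (sub_nonneg.2 (hP.col_sum_le j)) (hg j)
  have hslack' := fun i => Finset.sum_nonneg fun j (_ : j ∈ Finset.univ) => hslack i j
  rw [eq_comm, ← sub_eq_zero, assignment_duality_gap_eq,
    add_eq_zero_iff_of_nonneg
      (add_nonneg (Finset.sum_nonneg fun i _ => hslack' i) (Finset.sum_nonneg fun i _ => hrow i))
      (Finset.sum_nonneg fun j _ => hcol j),
    add_eq_zero_iff_of_nonneg (Finset.sum_nonneg fun i _ => hslack' i)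
      (Finset.sum_nonneg fun i _ => hrow i),
    Finset.sum_eq_zero_iff_of_nonneg fun i _ => hslack' i,
    Finset.sum_eq_zero_iff_of_nonneg fun i _ => hrow i,
    Finset.sum_eq_zero_iff_of_nonneg fun j _ => hcol j]
  simp only [Finset.sum_eq_zero_iff_of_nonneg fun j _ => hslack _ j, Finset.mem_univ, true_imp_iff,
    mul_eq_zero, sub_eq_zero, or_iff_not_imp_left, and_assoc, eq_comm (a := (1 : ℝ)),
    eq_comm (a := c _ _)]
  exact and_congr Iff.rfl
    (and_congr (forall_congr' fun _ => not_imp_comm) (forall_congr' fun _ => not_imp_comm))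

end IsDoublySubstochastic

end Assignment

section SingularFrame

variable {m n : ℕ} {ι κ : Type*} [DecidableEq ι] [DecidableEq κ]

theorem frobNorm_sq_eq_trace (A : Matrix (Fin m) (Fin n) ℝ) :
    frobNorm A ^ 2 = (Aᵀ * A).trace := by
  rw [frobNorm, Real.sq_sqrt (by positivity), Finset.sum_comm]
  simp [Matrix.trace, Matrix.mul_apply, sq]

theorem frobNorm_sub_sq_eq_zero_iff {A B : Matrix (Fin m) (Fin n) ℝ} :
    frobNorm (A - B) ^ 2 = 0 ↔ A = B := by
  rw [frobNorm_sq_eq_trace, ← conjTranspose_eq_transpose_of_trivial,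
    trace_conjTranspose_mul_self_eq_zero_iff, sub_eq_zero]

theorem frobNorm_sub_sq (A B : Matrix (Fin m) (Fin n) ℝ) :
    frobNorm (A - B) ^ 2 = frobNorm A ^ 2 + frobNorm B ^ 2 - 2 * (Aᵀ * B).trace := by
  have hsymm : (Bᵀ * A).trace = (Aᵀ * B).trace := by
    rw [← trace_transpose, transpose_mul, transpose_transpose]
  simp only [frobNorm_sq_eq_trace, transpose_sub, Matrix.sub_mul, Matrix.mul_sub, trace_sub, hsymm]
  ring

-- Bessel's inequality for the orthonormal columns of `A`, applied to the columns of `U`.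
theorem sum_sq_transpose_mul_le_one {l : Type*} [Fintype l] [Fintype κ] {U : Matrix l ι ℝ}
    {A : Matrix l κ ℝ} (hU : Uᵀ * U = 1) (hA : Aᵀ * A = 1) (i : ι) :
    ∑ j, (Uᵀ * A) i j ^ 2 ≤ 1 := by
  have hres : (U - A * (Aᵀ * U))ᵀ * (U - A * (Aᵀ * U)) = 1 - (Uᵀ * A) * (Uᵀ * A)ᵀ := by
    have hproj : Uᵀ * A * Aᵀ * (A * (Aᵀ * U)) = Uᵀ * A * (Aᵀ * U) := by
      rw [Matrix.mul_assoc (Uᵀ * A), ← Matrix.mul_assoc Aᵀ, hA, Matrix.one_mul]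
    simp only [transpose_sub, transpose_mul, transpose_transpose, Matrix.sub_mul, Matrix.mul_sub,
      hU, hproj]
    simp only [Matrix.mul_assoc, sub_self, sub_zero]
  have hdiag := congrFun (congrFun hres i) i
  simp only [Matrix.mul_apply (M := (U - A * (Aᵀ * U))ᵀ), Matrix.sub_apply, one_apply_eq,
    Matrix.mul_apply (M := Uᵀ * A), transpose_apply, ← sq] at hdiag
  have hnonneg : 0 ≤ ∑ k, (U k i - (A * (Aᵀ * U)) k i) ^ 2 := by positivity
  linarith

/-- Orthonormal families of left and right singular vectors, stored as the columns of two matrices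
with a common index type `ι`. -/
structure SingularFrame (m n : ℕ) (ι : Type*) [DecidableEq ι] where
  left : Matrix (Fin m) ι ℝ
  right : Matrix (Fin n) ι ℝ
  left_isometry : leftᵀ * left = 1
  right_isometry : rightᵀ * right = 1

namespace SingularFrame

/-- The matrix `∑ i, x i • uᵢ vᵢᵀ` with singular vectors `uᵢ`, `vᵢ` from the frame. For `x ≥ 0` this
is a singular value decomposition, with the weights in no particular order and possibly zero. -/
def toMatrix [Fintype ι] (F : SingularFrame m n ι) (x : ι → ℝ) : Matrix (Fin m) (Fin n) ℝ :=
  F.left * diagonal x * F.rightᵀ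

/-- The mean of the squared inner products of the left vectors and of the right vectors of two
frames. -/
noncomputable def overlap (F : SingularFrame m n ι) (G : SingularFrame m n κ) (i : ι) (j : κ) : ℝ :=
  ((F.leftᵀ * G.left) i j ^ 2 + (F.rightᵀ * G.right) i j ^ 2) / 2

/-- How far the left and the right inner products of two frames are from agreeing; it is the defect
in the bound of their product by the `overlap`. -/
def discrepancy (F : SingularFrame m n ι) (G : SingularFrame m n κ) (i : ι) (j : κ) : ℝ :=
  ((F.leftᵀ * G.left) i j - (F.rightᵀ * G.right) i j) ^ 2

variable (F : SingularFrame m n ι) (G : SingularFrame m n κ)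

theorem overlap_comm (i : ι) (j : κ) : G.overlap F j i = F.overlap G i j := by
  rw [overlap, overlap, ← transpose_apply (F.leftᵀ * G.left),
    ← transpose_apply (F.rightᵀ * G.right)]
  simp only [transpose_mul, transpose_transpose]

theorem sum_overlap_le_one [Fintype κ] (i : ι) : ∑ j, F.overlap G i j ≤ 1 := by
  have hleft := sum_sq_transpose_mul_le_one F.left_isometry G.left_isometry i
  have hright := sum_sq_transpose_mul_le_one F.right_isometry G.right_isometry i
  simp only [overlap, ← Finset.sum_div, Finset.sum_add_distrib]
  linarith

variable [Fintype ι] [Fintype κ]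

theorem isDoublySubstochastic_overlap : IsDoublySubstochastic (F.overlap G) where
  nonneg i j := by unfold overlap; positivity
  row_sum_le := F.sum_overlap_le_one G
  col_sum_le j := by simpa only [F.overlap_comm G] using G.sum_overlap_le_one F j

theorem trace_transpose_toMatrix_mul_toMatrix (s : ι → ℝ) (t : κ → ℝ) :
    ((F.toMatrix s)ᵀ * G.toMatrix t).trace =
      ∑ i, ∑ j, s i * t j * ((F.leftᵀ * G.left) i j * (F.rightᵀ * G.right) i j) := by
  have hcycle : ((F.toMatrix s)ᵀ * G.toMatrix t).trace =
      (diagonal s * (F.leftᵀ * G.left) * diagonal t * (F.rightᵀ * G.right)ᵀ).trace := by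
    simp only [toMatrix, transpose_mul, transpose_transpose, diagonal_transpose, Matrix.mul_assoc]
    rw [trace_mul_comm]
    simp only [Matrix.mul_assoc]
  rw [hcycle, Matrix.trace]
  simp only [diag_apply, Matrix.mul_apply (N := (F.rightᵀ * G.right)ᵀ), mul_diagonal, diagonal_mul,
    transpose_apply]
  exact Finset.sum_congr rfl fun i _ => Finset.sum_congr rfl fun j _ => by ring

theorem frobNorm_toMatrix_sq (x : ι → ℝ) : frobNorm (F.toMatrix x) ^ 2 = ∑ i, x i ^ 2 := by
  rw [frobNorm_sq_eq_trace, trace_transpose_toMatrix_mul_toMatrix, F.left_isometry,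
    F.right_isometry]
  simp [one_apply, sq]

-- `2ab = (a² + b²) - (a - b)²` splits the cross term into overlap and discrepancy.
theorem frobNorm_toMatrix_sub_toMatrix_sq (s : ι → ℝ) (t : κ → ℝ) :
    frobNorm (F.toMatrix s - G.toMatrix t) ^ 2 =
      ∑ i, s i ^ 2 + ∑ j, t j ^ 2 - ∑ i, ∑ j, F.overlap G i j * (2 * s i * t j)
        + ∑ i, ∑ j, s i * t j * F.discrepancy G i j := by
  have hcross : 2 * ((F.toMatrix s)ᵀ * G.toMatrix t).trace =
      ∑ i, ∑ j, F.overlap G i j * (2 * s i * t j) - ∑ i, ∑ j, s i * t j * F.discrepancy G i j := by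
    simp only [trace_transpose_toMatrix_mul_toMatrix, Finset.mul_sum, ← Finset.sum_sub_distrib,
      overlap, discrepancy]
    exact Finset.sum_congr rfl fun i _ => Finset.sum_congr rfl fun j _ => by ring
  rw [frobNorm_sub_sq, hcross, frobNorm_toMatrix_sq, frobNorm_toMatrix_sq]
  ring

theorem toMatrix_sub (s x : ι → ℝ) : F.toMatrix (s - x) = F.toMatrix s - F.toMatrix x := by
  simp only [toMatrix, ← Matrix.sub_mul, ← Matrix.mul_sub, diagonal_sub, Pi.sub_def]

variable {F G}

theorem sum_mul_discrepancy_nonneg {s : ι → ℝ} {t : κ → ℝ} (hs : ∀ i, 0 ≤ s i)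
    (ht : ∀ j, 0 ≤ t j) : 0 ≤ ∑ i, ∑ j, s i * t j * F.discrepancy G i j :=
  Finset.sum_nonneg fun i _ => Finset.sum_nonneg fun j _ =>
    mul_nonneg (mul_nonneg (hs i) (ht j)) (sq_nonneg _)

theorem sum_mul_discrepancy_eq_zero_iff {s : ι → ℝ} {t : κ → ℝ} (hs : ∀ i, 0 ≤ s i)
    (ht : ∀ j, 0 ≤ t j) : ∑ i, ∑ j, s i * t j * F.discrepancy G i j = 0 ↔
      ∀ i j, s i * t j * F.discrepancy G i j = 0 := by
  have hterm : ∀ i j, 0 ≤ s i * t j * F.discrepancy G i j :=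
    fun i j => mul_nonneg (mul_nonneg (hs i) (ht j)) (sq_nonneg _)
  rw [Finset.sum_eq_zero_iff_of_nonneg fun i _ => Finset.sum_nonneg fun j _ => hterm i j]
  simp only [Finset.sum_eq_zero_iff_of_nonneg fun j _ => hterm _ j, Finset.mem_univ, true_imp_iff]

theorem toMatrix_eq_toMatrix_iff {x : ι → ℝ} {t : κ → ℝ} (hx : ∀ i, 0 ≤ x i) (ht : ∀ j, 0 ≤ t j) :
    F.toMatrix x = G.toMatrix t ↔ IsFractionalMatching (F.overlap G) x t ∧
      ∀ i j, x i * t j * F.discrepancy G i j = 0 := by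
  have hP := F.isDoublySubstochastic_overlap G
  have hf : ∀ i, 0 ≤ x i ^ 2 := fun i => sq_nonneg _
  have hg : ∀ j, 0 ≤ t j ^ 2 := fun j => sq_nonneg _
  have hc : ∀ i j, 2 * x i * t j ≤ x i ^ 2 + t j ^ 2 := fun i j => two_mul_le_add_sq _ _
  have hmatching : IsFractionalMatching (F.overlap G) x t ↔
      ∑ i, ∑ j, F.overlap G i j * (2 * x i * t j) = ∑ i, x i ^ 2 + ∑ j, t j ^ 2 := by
    have heq : ∀ i j, 2 * x i * t j = x i ^ 2 + t j ^ 2 ↔ x i = t j := fun i j => by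
      rw [← sub_eq_zero (a := x i), ← sq_eq_zero_iff, sub_sq', eq_comm, sub_eq_zero]
    simp only [hP.sum_mul_eq_iff hf hg hc, heq, Ne, sq_eq_zero_iff]
    exact ⟨fun h => ⟨h.1, h.2, h.3⟩, fun h => ⟨h.1, h.2.1, h.2.2⟩⟩
  rw [← frobNorm_sub_sq_eq_zero_iff, frobNorm_toMatrix_sub_toMatrix_sq, add_eq_zero_iff_of_nonneg
    (sub_nonneg.2 (hP.sum_mul_le hf hg hc)) (sum_mul_discrepancy_nonneg hx ht), hmatching,
    sum_mul_discrepancy_eq_zero_iff hx ht, sub_eq_zero, eq_comm]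

end SingularFrame

end SingularFrame

section SingularValues

variable {m n : ℕ}

/-- The singular values of `A` with the multiplicity and in the order of the eigenvalues of `Aᴴ A`;
if `m < n`, then `n - m` of them are zeros that do not occur in `singularValue`. -/
noncomputable def sqrtEigenvalue (A : Matrix (Fin m) (Fin n) ℝ) (k : Fin n) : ℝ :=
  √((isHermitian_conjTranspose_mul_self A).eigenvalues k)

theorem sqrtEigenvalue_nonneg (A : Matrix (Fin m) (Fin n) ℝ) (k : Fin n) :
    0 ≤ sqrtEigenvalue A k :=
  Real.sqrt_nonneg _

theorem sqrtEigenvalue_sq (A : Matrix (Fin m) (Fin n) ℝ) (k : Fin n) :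
    sqrtEigenvalue A k ^ 2 = (isHermitian_conjTranspose_mul_self A).eigenvalues k :=
  Real.sq_sqrt ((posSemidef_conjTranspose_mul_self A).eigenvalues_nonneg k)

theorem card_sqrtEigenvalue_ne_zero_le (A : Matrix (Fin m) (Fin n) ℝ) :
    Fintype.card {k // sqrtEigenvalue A k ≠ 0} ≤ m := by
  have hrank := (isHermitian_conjTranspose_mul_self A).rank_eq_card_non_zero_eigs
  simp only [rank_conjTranspose_mul_self, ← sqrtEigenvalue_sq, ne_eq,
    pow_eq_zero_iff two_ne_zero] at hrank
  exact hrank ▸ A.rank_le_height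

/-- The column of `sqrtEigenvalue` at which `singularValue` reads its `i`-th value. -/
noncomputable def singularIndex (A : Matrix (Fin m) (Fin n) ℝ) (i : Fin (min m n)) : Fin n :=
  Tuple.sort (sqrtEigenvalue A) (Fin.castLE (Nat.min_le_right m n) i).rev

theorem singularIndex_injective (A : Matrix (Fin m) (Fin n) ℝ) :
    Function.Injective (singularIndex A) :=
  (Tuple.sort (sqrtEigenvalue A)).injective.comp
    (Fin.rev_injective.comp (Fin.castLE_injective _))

theorem singularValue_eq_sqrtEigenvalue (A : Matrix (Fin m) (Fin n) ℝ) (i : Fin (min m n)) :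
    singularValue A i = sqrtEigenvalue A (singularIndex A i) :=
  rfl

theorem singularValue_nonneg (A : Matrix (Fin m) (Fin n) ℝ) (i : Fin (min m n)) :
    0 ≤ singularValue A i :=
  sqrtEigenvalue_nonneg A _

theorem sqrtEigenvalue_sort_rev_eq_zero (A : Matrix (Fin m) (Fin n) ℝ) {k : Fin n} (hk : m ≤ k) :
    sqrtEigenvalue A (Tuple.sort (sqrtEigenvalue A) k.rev) = 0 := by
  by_contra hne
  have hpos := lt_of_le_of_ne (sqrtEigenvalue_nonneg A _) (Ne.symm hne)
  have hsub : (Finset.Ici k.rev).map (Tuple.sort (sqrtEigenvalue A)).toEmbedding ⊆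
      Finset.univ.filter fun l => sqrtEigenvalue A l ≠ 0 := fun _ hl => by
    obtain ⟨l, hkl, rfl⟩ := Finset.mem_map.1 hl
    have hle := Tuple.monotone_sort (sqrtEigenvalue A) (Finset.mem_Ici.1 hkl)
    exact Finset.mem_filter.2 ⟨Finset.mem_univ _, (hpos.trans_le hle).ne'⟩
  have hcard := (Finset.card_le_card hsub).trans
    ((Fintype.card_subtype _).symm.trans_le (card_sqrtEigenvalue_ne_zero_le A))
  rw [Finset.card_map, Fin.card_Ici, Fin.val_rev] at hcard
  omega

theorem sqrtEigenvalue_eq_zero_of_notMem_range (A : Matrix (Fin m) (Fin n) ℝ) {k : Fin n}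
    (hk : k ∉ Set.range (singularIndex A)) : sqrtEigenvalue A k = 0 := by
  obtain ⟨l, rfl⟩ : ∃ l : Fin n, Tuple.sort (sqrtEigenvalue A) l.rev = k :=
    ⟨((Tuple.sort (sqrtEigenvalue A)).symm k).rev, by simp⟩
  refine sqrtEigenvalue_sort_rev_eq_zero A (not_lt.1 fun hlt => hk ⟨⟨l, ?_⟩, rfl⟩)
  exact lt_min hlt l.isLt

theorem exists_orthogonal_gram_eq_diagonal (A : Matrix (Fin m) (Fin n) ℝ) :
    ∃ W : Matrix (Fin n) (Fin n) ℝ, Wᵀ * W = 1 ∧ W * Wᵀ = 1 ∧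
      (A * W)ᵀ * (A * W) = diagonal fun k => sqrtEigenvalue A k ^ 2 := by
  have hA := isHermitian_conjTranspose_mul_self A
  have hspectral := hA.conjStarAlgAut_star_eigenvectorUnitary
  rw [Unitary.conjStarAlgAut_star_apply] at hspectral
  refine ⟨hA.eigenvectorUnitary, Unitary.coe_star_mul_self hA.eigenvectorUnitary,
    Unitary.coe_mul_star_self hA.eigenvectorUnitary, ?_⟩
  simp only [sqrtEigenvalue_sq, transpose_mul]
  rw [Matrix.mul_assoc, ← Matrix.mul_assoc Aᵀ, ← Matrix.mul_assoc]
  exact hspectral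

theorem apply_eq_zero_of_transpose_mul_self_eq_diagonal {l κ : Type*} [Fintype l] [DecidableEq κ]
    {B : Matrix l κ ℝ} {d : κ → ℝ} (hB : Bᵀ * B = diagonal d) {k : κ} (hk : d k = 0) (p : l) :
    B p k = 0 := by
  have hcol : ∑ p, B p k * B p k = 0 := by
    simpa [Matrix.mul_apply, hk] using congrFun (congrFun hB k) k
  exact mul_self_eq_zero.1
    ((Finset.sum_eq_zero_iff_of_nonneg fun p _ => mul_self_nonneg _).1 hcol p (Finset.mem_univ p))

theorem transpose_mul_self_normalized_columns_eq_one {l ι κ : Type*} [Fintype l] [DecidableEq ι]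
    [DecidableEq κ] {B : Matrix l κ ℝ} {d : κ → ℝ} (hB : Bᵀ * B = diagonal fun k => d k ^ 2)
    {e : ι → κ} (he : Function.Injective e) (hd : ∀ i, d (e i) ≠ 0) :
    (of fun p i => B p (e i) / d (e i))ᵀ * (of fun p i => B p (e i) / d (e i)) = 1 := by
  ext i j
  have hij : ∑ p, B p (e i) * B p (e j) = if i = j then d (e i) ^ 2 else 0 := by
    simpa only [Matrix.mul_apply, transpose_apply, diagonal_apply, he.eq_iff]
      using congrFun (congrFun hB (e i)) (e j)
  simp only [Matrix.mul_apply, transpose_apply, of_apply, div_mul_div_comm, ← Finset.sum_div, hij,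
    one_apply]
  rcases eq_or_ne i j with rfl | hne
  · rw [if_pos rfl, if_pos rfl, ← sq, div_self (pow_ne_zero 2 (hd i))]
  · rw [if_neg hne, if_neg hne, zero_div]

theorem exists_singularFrame_toMatrix_eq (A : Matrix (Fin m) (Fin n) ℝ) :
    ∃ F : SingularFrame m n {i // singularValue A i ≠ 0},
      F.toMatrix (fun i => singularValue A i) = A := by
  obtain ⟨W, hW, hW', hgram⟩ := exists_orthogonal_gram_eq_diagonal A
  set e : {i // singularValue A i ≠ 0} → Fin n := fun i => singularIndex A i
  have he : Function.Injective e := (singularIndex_injective A).comp Subtype.val_injective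
  have hzero : ∀ k ∉ Set.range e, ∀ p, (A * W) p k = 0 := fun k hk => by
    have hσ : sqrtEigenvalue A k = 0 := by
      by_contra hne
      obtain ⟨i, rfl⟩ := not_imp_comm.1 (sqrtEigenvalue_eq_zero_of_notMem_range A) hne
      exact hk ⟨⟨i, hne⟩, rfl⟩
    exact apply_eq_zero_of_transpose_mul_self_eq_diagonal hgram (by rw [hσ, zero_pow two_ne_zero])
  have hright : (W.submatrix id e)ᵀ * W.submatrix id e = 1 := by
    rw [transpose_submatrix, ← submatrix_mul _ _ e id e Function.bijective_id, hW,
      submatrix_one e he]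
  refine ⟨⟨of fun p i => (A * W) p (e i) / sqrtEigenvalue A (e i), W.submatrix id e,
    transpose_mul_self_normalized_columns_eq_one hgram he fun i => i.2, hright⟩, ?_⟩
  have hA : A = A * W * Wᵀ := by rw [Matrix.mul_assoc, hW', Matrix.mul_one]
  ext p k
  conv_rhs => rw [hA, Matrix.mul_apply]
  simp only [SingularFrame.toMatrix, Matrix.mul_apply (N := _ᵀ), mul_diagonal]
  refine Fintype.sum_of_injective e he _ _ (fun k hk => by rw [hzero k hk, zero_mul]) fun i => ?_
  rw [of_apply, ← singularValue_eq_sqrtEigenvalue, div_mul_cancel₀ _ i.2, transpose_apply,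
    transpose_apply, submatrix_apply, id]

theorem sum_singularValue_ne_zero (A : Matrix (Fin m) (Fin n) ℝ) {ρ : ℝ → ℝ} (hρ : ρ 0 = 0) :
    ∑ i : {i // singularValue A i ≠ 0}, ρ (singularValue A i) = ∑ i, ρ (singularValue A i) :=
  Fintype.sum_of_injective Subtype.val Subtype.val_injective _ _
    (fun i hi => by rw [not_imp_comm.1 (fun hne => ⟨⟨i, hne⟩, rfl⟩) hi, hρ]) fun _ => rfl

theorem SingularFrame.sum_singularValue_toMatrix {ι : Type*} [Fintype ι] [DecidableEq ι]
    (F : SingularFrame m n ι) {x : ι → ℝ} (hx : ∀ i, 0 ≤ x i) {ρ : ℝ → ℝ} (hρ : ρ 0 = 0) :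
    ∑ i, ρ (singularValue (F.toMatrix x) i) = ∑ i, ρ (x i) := by
  obtain ⟨G, hG⟩ := exists_singularFrame_toMatrix_eq (F.toMatrix x)
  have hmatching := ((toMatrix_eq_toMatrix_iff (fun _ => singularValue_nonneg _ _) hx).1 hG).1
  rw [← hmatching.sum_comp_eq hρ, sum_singularValue_ne_zero _ hρ]

end SingularValues

section Scalar

/-- `x` is the unique minimizer over `[0, ∞)` of the scalar problem `t ↦ (s - t)² + ρ t`, i.e. the
value at `s` of the proximal map of the penalty `ρ`. -/
structure IsStrictProx (ρ : ℝ → ℝ) (s x : ℝ) : Prop where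
  nonneg : 0 ≤ x
  lt_of_ne : ∀ t, 0 ≤ t → t ≠ x → (s - x) ^ 2 + ρ x < (s - t) ^ 2 + ρ t

namespace IsStrictProx

variable {ρ : ℝ → ℝ} {s x t : ℝ}

theorem le (hx : IsStrictProx ρ s x) (ht : 0 ≤ t) :
    (s - x) ^ 2 + ρ x ≤ (s - t) ^ 2 + ρ t := by
  rcases eq_or_ne t x with rfl | hne
  · exact le_rfl
  · exact (hx.lt_of_ne t ht hne).le

theorem eq_of_le (hx : IsStrictProx ρ s x) (ht : 0 ≤ t)
    (hle : (s - t) ^ 2 + ρ t ≤ (s - x) ^ 2 + ρ x) : t = x := by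
  by_contra hne
  exact (hx.lt_of_ne t ht hne).not_ge hle

theorem le_sq (hx : IsStrictProx ρ s x) (hρ : ρ 0 = 0) : (s - x) ^ 2 + ρ x ≤ s ^ 2 := by
  simpa [hρ] using hx.le le_rfl

theorem eq_zero_of_sq_le (hx : IsStrictProx ρ s x) (hρ : ρ 0 = 0)
    (hle : s ^ 2 ≤ (s - x) ^ 2 + ρ x) : x = 0 :=
  (hx.eq_of_le le_rfl (by simpa [hρ] using hle)).symm

theorem two_mul_mul_le (hx : IsStrictProx ρ s x) (ht : 0 ≤ t) :
    2 * s * t ≤ (s ^ 2 - ((s - x) ^ 2 + ρ x)) + (t ^ 2 + ρ t) := by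
  linarith [hx.le ht, sub_sq s t]

theorem eq_of_two_mul_mul_eq (hx : IsStrictProx ρ s x) (ht : 0 ≤ t)
    (heq : 2 * s * t = (s ^ 2 - ((s - x) ^ 2 + ρ x)) + (t ^ 2 + ρ t)) : x = t :=
  (hx.eq_of_le ht (by linarith [sub_sq s t])).symm

end IsStrictProx

theorem strictConvexOn_rpow_of_neg {p : ℝ} (hp : p < 0) :
    StrictConvexOn ℝ (Set.Ioi 0) fun t : ℝ => t ^ p := by
  have hderiv : ∀ t ∈ Set.Ioi (0 : ℝ), deriv (fun t : ℝ => t ^ p) t = p * t ^ (p - 1) :=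
    fun t ht => (Real.hasDerivAt_rpow_const (Or.inl ht.ne')).deriv
  have hcont : ContinuousOn (fun t : ℝ => t ^ p) (Set.Ioi 0) :=
    fun t ht => (Real.continuousAt_rpow_const t p (Or.inl ht.ne')).continuousWithinAt
  refine StrictMonoOn.strictConvexOn_of_deriv (convex_Ioi 0) hcont fun a ha b hb hab => ?_
  rw [interior_Ioi] at ha hb
  rw [hderiv a ha, hderiv b hb]
  exact mul_lt_mul_of_neg_left (Real.rpow_lt_rpow_of_neg ha hab (by linarith)) hp

theorem hasDerivAt_sq_sub_add_mul_rpow (lam q s : ℝ) {t : ℝ} (ht : t ≠ 0) :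
    HasDerivAt (fun t : ℝ => (s - t) ^ 2 + lam * t ^ q)
      (2 * (t - s) + lam * q * t ^ (q - 1)) t := by
  have hsq := ((hasDerivAt_id t).const_sub s).pow 2
  have hpow := (Real.hasDerivAt_rpow_const (p := q) (Or.inl ht)).const_mul lam
  refine (hsq.add hpow).congr_deriv ?_
  simp only [id, Nat.cast_ofNat]
  ring

theorem strictConvexOn_deriv_sq_sub_add_mul_rpow {lam q : ℝ} (hlam : 0 < lam) (hq0 : 0 < q)
    (hq1 : q < 1) (s : ℝ) :
    StrictConvexOn ℝ (Set.Ioi 0) fun t : ℝ => 2 * (t - s) + lam * q * t ^ (q - 1) := by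
  have hpow := strictConvexOn_rpow_of_neg (sub_neg.2 hq1)
  refine ⟨convex_Ioi 0, fun x hx y hy hxy a b ha hb hab => ?_⟩
  have hlt := mul_lt_mul_of_pos_left (hpow.2 hx hy hxy ha hb hab) (mul_pos hlam hq0)
  simp only [smul_eq_mul] at hlt ⊢
  linear_combination hlt + 2 * s * hab

-- Otherwise Rolle's theorem gives a third zero of the derivative, which is strictly convex.
theorem eq_of_isMinOn_sq_sub_add_mul_rpow {lam q s x y : ℝ} (hlam : 0 < lam) (hq0 : 0 < q)
    (hq1 : q < 1) (hx : 0 < x) (hy : 0 < y)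
    (hxmin : IsMinOn (fun t : ℝ => (s - t) ^ 2 + lam * t ^ q) (Set.Ici 0) x)
    (hymin : IsMinOn (fun t : ℝ => (s - t) ^ 2 + lam * t ^ q) (Set.Ici 0) y) : x = y := by
  wlog hxy : x < y generalizing x y
  · rcases eq_or_lt_of_not_gt hxy with h | h
    · exact h.symm
    · exact (this hy hx hymin hxmin h).symm
  have hderiv {t : ℝ} (ht : 0 < t) := hasDerivAt_sq_sub_add_mul_rpow lam q s ht.ne'
  have hcrit {t : ℝ} (ht : 0 < t)
      (hmin : IsMinOn (fun t : ℝ => (s - t) ^ 2 + lam * t ^ q) (Set.Ici 0) t) :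
      2 * (t - s) + lam * q * t ^ (q - 1) = 0 :=
    (hmin.isLocalMin (Ici_mem_nhds ht)).hasDerivAt_eq_zero (hderiv ht)
  obtain ⟨z, hz, hz0⟩ := exists_hasDerivAt_eq_zero hxy
    (fun t ht => (hderiv (hx.trans_le ht.1)).continuousAt.continuousWithinAt)
    (le_antisymm (hxmin hy.le) (hymin hx.le)) fun t ht => hderiv (hx.trans ht.1)
  have hlt := (strictConvexOn_deriv_sq_sub_add_mul_rpow hlam hq0 hq1 s).lt_on_openSegment hx hy
    hxy.ne (openSegment_eq_Ioo hxy ▸ hz)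
  rw [hz0, hcrit hx hxmin, hcrit hy hymin, max_self] at hlt
  exact (lt_irrefl 0 hlt).elim

theorem exists_isMinOn_sq_sub_add_mul_rpow {lam q s : ℝ} (hlam : 0 ≤ lam) (hq0 : 0 ≤ q)
    (hs : 0 ≤ s) :
    ∃ x, 0 ≤ x ∧ IsMinOn (fun t : ℝ => (s - t) ^ 2 + lam * t ^ q) (Set.Ici 0) x := by
  have hcont : Continuous fun t : ℝ => (s - t) ^ 2 + lam * t ^ q := by
    have := Real.continuous_rpow_const hq0
    fun_prop
  obtain ⟨x, hx, hmin⟩ := isCompact_Icc.exists_isMinOn (Set.nonempty_Icc.2 hs) hcont.continuousOn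
  refine ⟨x, hx.1, fun t ht => ?_⟩
  rcases le_total t s with hts | hst
  · exact hmin ⟨ht, hts⟩
  · calc (s - x) ^ 2 + lam * x ^ q ≤ (s - s) ^ 2 + lam * s ^ q := hmin ⟨hs, le_rfl⟩
      _ ≤ (s - t) ^ 2 + lam * t ^ q := by
        rw [sub_self, zero_pow two_ne_zero]
        gcongr
        exact sq_nonneg _

/-- The threshold `τ`: data `s < τ` are shrunk to `0` by the penalty `lam * t ^ q`, data `s > τ` are
not. It is half the minimum over `t > 0` of `t + lam * t ^ (q - 1)`. -/
noncomputable def rpowThreshold (lam q : ℝ) : ℝ :=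
  (1 - q / 2) * lam ^ (1 / (2 - q)) * (1 - q) ^ ((q - 1) / (2 - q))

theorem rpowThreshold_pos {lam q : ℝ} (hlam : 0 < lam) (hq1 : q < 1) : 0 < rpowThreshold lam q :=
  mul_pos (mul_pos (by linarith) (Real.rpow_pos_of_pos hlam _))
    (Real.rpow_pos_of_pos (by linarith) _)

-- Weighted AM-GM with weights `(1 - q) / (2 - q)` and `1 / (2 - q)`, chosen so that `t` cancels.
theorem two_mul_rpowThreshold_le {lam q t : ℝ} (hlam : 0 < lam) (hq1 : q < 1) (ht : 0 < t) :
    2 * rpowThreshold lam q ≤ t + lam * t ^ (q - 1) := by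
  have h1 : 0 < 1 - q := by linarith
  have h2 : 0 < 2 - q := by linarith
  have hexp : (q - 1) / (2 - q) = -((1 - q) / (2 - q)) := by ring
  have hgeom : (t / (1 - q)) ^ ((1 - q) / (2 - q)) * (lam * t ^ (q - 1)) ^ (1 / (2 - q))
      = lam ^ (1 / (2 - q)) * (1 - q) ^ ((q - 1) / (2 - q)) := by
    rw [Real.div_rpow ht.le h1.le, Real.mul_rpow hlam.le (by positivity), ← Real.rpow_mul ht.le,
      mul_one_div, hexp, Real.rpow_neg ht.le, Real.rpow_neg h1.le]
    field_simp
  have hamgm := Real.geom_mean_le_arith_mean2_weighted (div_nonneg h1.le h2.le)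
    (one_div_nonneg.2 h2.le) (div_nonneg ht.le h1.le) (by positivity : 0 ≤ lam * t ^ (q - 1))
    (by field_simp; ring)
  calc 2 * rpowThreshold lam q
      = (2 - q) * ((t / (1 - q)) ^ ((1 - q) / (2 - q)) * (lam * t ^ (q - 1)) ^ (1 / (2 - q))) := by
        rw [hgeom, rpowThreshold]
        ring
    _ ≤ (2 - q) * ((1 - q) / (2 - q) * (t / (1 - q)) + 1 / (2 - q) * (lam * t ^ (q - 1))) := by
        gcongr
    _ = t + lam * t ^ (q - 1) := by field_simp

theorem exists_add_mul_rpow_eq_two_mul_rpowThreshold {lam q : ℝ} (hlam : 0 < lam) (hq1 : q < 1) :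
    ∃ t, 0 < t ∧ t + lam * t ^ (q - 1) = 2 * rpowThreshold lam q := by
  have h1 : 0 < 1 - q := by linarith
  have h2 : 0 < 2 - q := by linarith
  set t := (lam * (1 - q)) ^ (1 / (2 - q)) with ht
  have htpos : 0 < t := by positivity
  have hpow : t ^ (2 - q) = lam * (1 - q) := by
    rw [ht, ← Real.rpow_mul (by positivity), one_div_mul_cancel h2.ne', Real.rpow_one]
  have hcrit : lam * t ^ (q - 1) * (1 - q) = t := by
    rw [mul_right_comm, ← hpow, ← Real.rpow_add htpos]
    norm_num
  have hτ : 2 * rpowThreshold lam q * (1 - q) = (2 - q) * t := by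
    have hexp : (1 - q) ^ ((q - 1) / (2 - q)) * (1 - q) = (1 - q) ^ (1 / (2 - q)) := by
      rw [← Real.rpow_add_one h1.ne']
      congr 1
      field_simp
      ring
    rw [ht, Real.mul_rpow hlam.le h1.le, ← hexp, rpowThreshold]
    ring
  refine ⟨t, htpos, mul_right_cancel₀ h1.ne' ?_⟩
  linear_combination hcrit - hτ

theorem sq_sub_add_mul_rpow_eq {t : ℝ} (lam q s : ℝ) (ht : t ≠ 0) :
    (s - t) ^ 2 + lam * t ^ q = s ^ 2 + t * (t + lam * t ^ (q - 1) - 2 * s) := by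
  rw [Real.rpow_sub_one ht]
  field_simp
  ring

theorem isStrictProx_zero_of_lt_rpowThreshold {lam q s : ℝ} (hlam : 0 < lam) (hq0 : q ≠ 0)
    (hq1 : q < 1) (hs : s < rpowThreshold lam q) : IsStrictProx (fun t => lam * t ^ q) s 0 := by
  refine ⟨le_rfl, fun t ht hne => ?_⟩
  have htpos : 0 < t := lt_of_le_of_ne ht hne.symm
  have hslope : 0 < t + lam * t ^ (q - 1) - 2 * s := by
    linarith [two_mul_rpowThreshold_le hlam hq1 htpos]
  simpa [sq_sub_add_mul_rpow_eq lam q s hne, Real.zero_rpow hq0] using mul_pos htpos hslope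

theorem ne_zero_of_isMinOn_of_rpowThreshold_lt {lam q s x : ℝ} (hlam : 0 < lam) (hq0 : q ≠ 0)
    (hq1 : q < 1) (hs : rpowThreshold lam q < s)
    (hx : IsMinOn (fun t : ℝ => (s - t) ^ 2 + lam * t ^ q) (Set.Ici 0) x) : x ≠ 0 := by
  rintro rfl
  obtain ⟨t, ht, hslope⟩ := exists_add_mul_rpow_eq_two_mul_rpowThreshold hlam hq1
  have hle : (s - 0) ^ 2 + lam * 0 ^ q ≤ (s - t) ^ 2 + lam * t ^ q := hx ht.le
  rw [sq_sub_add_mul_rpow_eq lam q s ht.ne', hslope, Real.zero_rpow hq0] at hle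
  have hlt : t * (2 * rpowThreshold lam q - 2 * s) < 0 :=
    mul_neg_of_pos_of_neg ht (by linarith)
  linarith

theorem exists_isStrictProx_of_ne_rpowThreshold {lam q s : ℝ} (hlam : 0 < lam) (hq0 : 0 < q)
    (hq1 : q < 1) (hs : s ≠ rpowThreshold lam q) :
    ∃ x, IsStrictProx (fun t => lam * t ^ q) s x := by
  rcases hs.lt_or_gt with hlt | hgt
  · exact ⟨0, isStrictProx_zero_of_lt_rpowThreshold hlam hq0.ne' hq1 hlt⟩
  have hpos {x : ℝ} (hx : 0 ≤ x)
      (hmin : IsMinOn (fun t : ℝ => (s - t) ^ 2 + lam * t ^ q) (Set.Ici 0) x) : 0 < x :=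
    lt_of_le_of_ne hx (ne_zero_of_isMinOn_of_rpowThreshold_lt hlam hq0.ne' hq1 hgt hmin).symm
  obtain ⟨x, hx, hxmin⟩ := exists_isMinOn_sq_sub_add_mul_rpow hlam.le hq0.le
    ((rpowThreshold_pos hlam hq1).trans hgt).le
  refine ⟨x, hx, fun t ht hne => lt_of_not_ge fun hle => hne ?_⟩
  have htmin : IsMinOn (fun t : ℝ => (s - t) ^ 2 + lam * t ^ q) (Set.Ici 0) t :=
    fun y hy => hle.trans (hxmin hy)
  exact eq_of_isMinOn_sq_sub_add_mul_rpow hlam hq0 hq1 (hpos ht htmin) (hpos hx hxmin) htmin hxmin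

end Scalar

section SpectralPenalty

variable {m n : ℕ} {ι κ : Type*} [Fintype ι] [Fintype κ] [DecidableEq ι] [DecidableEq κ]
  {F : SingularFrame m n ι} {G : SingularFrame m n κ} {ρ : ℝ → ℝ} {s x : ι → ℝ} {t : κ → ℝ}

/-- The least-squares objective for the data `Y` with the penalty `ρ` on each singular value;
`ρ t = lam * t ^ q` is the Schatten-`q` penalty. -/
noncomputable def spectralLoss (ρ : ℝ → ℝ) (Y M : Matrix (Fin m) (Fin n) ℝ) : ℝ :=
  frobNorm (Y - M) ^ 2 + ∑ i, ρ (singularValue M i)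

namespace SingularFrame

theorem spectralLoss_toMatrix (hρ : ρ 0 = 0) (Y : Matrix (Fin m) (Fin n) ℝ)
    (ht : ∀ j, 0 ≤ t j) :
    spectralLoss ρ Y (G.toMatrix t) = frobNorm (Y - G.toMatrix t) ^ 2 + ∑ j, ρ (t j) := by
  rw [spectralLoss, G.sum_singularValue_toMatrix ht hρ]

theorem spectralLoss_toMatrix_toMatrix (hρ : ρ 0 = 0) (hx : ∀ i, 0 ≤ x i) :
    spectralLoss ρ (F.toMatrix s) (F.toMatrix x) = ∑ i, ((s i - x i) ^ 2 + ρ (x i)) := by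
  rw [spectralLoss_toMatrix hρ _ hx, ← toMatrix_sub, frobNorm_toMatrix_sq, Finset.sum_add_distrib]
  rfl

-- The gap is the dual gap of an assignment problem in which `overlap` is the feasible point,
-- `2 * s i * t j` the profit, and the terms of the first two sums are the dual variables.
theorem spectralLoss_toMatrix_sub_sum_eq (hρ : ρ 0 = 0) (s x : ι → ℝ) (ht : ∀ j, 0 ≤ t j) :
    spectralLoss ρ (F.toMatrix s) (G.toMatrix t) - ∑ i, ((s i - x i) ^ 2 + ρ (x i)) =
      ∑ i, (s i ^ 2 - ((s i - x i) ^ 2 + ρ (x i))) + ∑ j, (t j ^ 2 + ρ (t j))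
        - ∑ i, ∑ j, F.overlap G i j * (2 * s i * t j)
        + ∑ i, ∑ j, s i * t j * F.discrepancy G i j := by
  rw [spectralLoss_toMatrix hρ _ ht, frobNorm_toMatrix_sub_toMatrix_sq, Finset.sum_sub_distrib,
    Finset.sum_add_distrib (f := fun j => t j ^ 2)]
  ring

theorem sum_prox_le_spectralLoss (F : SingularFrame m n ι) (G : SingularFrame m n κ)
    (hρ₀ : ρ 0 = 0) (hρ : ∀ t, 0 ≤ t → 0 ≤ ρ t) (hs : ∀ i, 0 ≤ s i)
    (hx : ∀ i, IsStrictProx ρ (s i) (x i)) (ht : ∀ j, 0 ≤ t j) :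
    ∑ i, ((s i - x i) ^ 2 + ρ (x i)) ≤ spectralLoss ρ (F.toMatrix s) (G.toMatrix t) := by
  rw [← sub_nonneg, spectralLoss_toMatrix_sub_sum_eq hρ₀ s x ht]
  refine add_nonneg (sub_nonneg.2 ?_) (sum_mul_discrepancy_nonneg hs ht)
  exact (F.isDoublySubstochastic_overlap G).sum_mul_le (fun i => sub_nonneg.2 ((hx i).le_sq hρ₀))
    (fun j => add_nonneg (sq_nonneg _) (hρ _ (ht j))) fun i j => (hx i).two_mul_mul_le (ht j)

theorem toMatrix_eq_toMatrix_of_spectralLoss_le (F : SingularFrame m n ι)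
    (G : SingularFrame m n κ) (hρ₀ : ρ 0 = 0) (hρ : ∀ t, 0 ≤ t → 0 ≤ ρ t)
    (hs : ∀ i, 0 < s i) (hx : ∀ i, IsStrictProx ρ (s i) (x i)) (ht : ∀ j, 0 ≤ t j)
    (hle : spectralLoss ρ (F.toMatrix s) (G.toMatrix t) ≤ ∑ i, ((s i - x i) ^ 2 + ρ (x i))) :
    F.toMatrix x = G.toMatrix t := by
  have hP := F.isDoublySubstochastic_overlap G
  have hf : ∀ i, 0 ≤ s i ^ 2 - ((s i - x i) ^ 2 + ρ (x i)) :=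
    fun i => sub_nonneg.2 ((hx i).le_sq hρ₀)
  have hg : ∀ j, 0 ≤ t j ^ 2 + ρ (t j) := fun j => add_nonneg (sq_nonneg _) (hρ _ (ht j))
  have hc := fun i j => (hx i).two_mul_mul_le (ht j)
  have hs₀ := fun i => (hs i).le
  have hgap := le_antisymm (sub_nonpos.2 hle)
    (sub_nonneg.2 (F.sum_prox_le_spectralLoss G hρ₀ hρ hs₀ hx ht))
  rw [spectralLoss_toMatrix_sub_sum_eq hρ₀ s x ht,
    add_eq_zero_iff_of_nonneg (sub_nonneg.2 (hP.sum_mul_le hf hg hc))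
      (sum_mul_discrepancy_nonneg hs₀ ht),
    sub_eq_zero, eq_comm, hP.sum_mul_eq_iff hf hg hc,
    sum_mul_discrepancy_eq_zero_iff hs₀ ht] at hgap
  obtain ⟨⟨htight, hrow, hcol⟩, hdisc⟩ := hgap
  refine (toMatrix_eq_toMatrix_iff (fun i => (hx i).nonneg) ht).2 ⟨⟨?_, ?_, ?_⟩, fun i j => ?_⟩
  · exact fun i j hij => (hx i).eq_of_two_mul_mul_eq (ht j) (htight i j hij)
  · exact fun i hi => hrow i fun hf₀ => hi ((hx i).eq_zero_of_sq_le hρ₀ (sub_eq_zero.1 hf₀).le)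
  · exact fun j hj => hcol j (add_pos_of_pos_of_nonneg (by positivity) (hρ _ (ht j))).ne'
  · have htdisc := hdisc i j
    rw [mul_assoc, mul_eq_zero_iff_left (hs i).ne'] at htdisc
    rw [mul_assoc, htdisc, mul_zero]

end SingularFrame

theorem existsUnique_forall_spectralLoss_le (hρ₀ : ρ 0 = 0) (hρ : ∀ t, 0 ≤ t → 0 ≤ ρ t)
    {Y : Matrix (Fin m) (Fin n) ℝ} (hY : ∀ i, ∃ x, IsStrictProx ρ (singularValue Y i) x) :
    ∃! M, ∀ X, spectralLoss ρ Y M ≤ spectralLoss ρ Y X := by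
  choose x hx using hY
  obtain ⟨F, hF⟩ := exists_singularFrame_toMatrix_eq Y
  have hpos : ∀ i : {i // singularValue Y i ≠ 0}, 0 < singularValue Y i :=
    fun i => lt_of_le_of_ne (singularValue_nonneg Y i) i.2.symm
  have hprox := fun i : {i // singularValue Y i ≠ 0} => hx i
  have hmin := F.spectralLoss_toMatrix_toMatrix (s := fun i => singularValue Y i) hρ₀
    fun i => (hprox i).nonneg
  have hstrict : ∀ X, spectralLoss ρ Y (F.toMatrix fun i => x i) ≤ spectralLoss ρ Y X ∧
      (spectralLoss ρ Y X ≤ spectralLoss ρ Y (F.toMatrix fun i => x i) →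
        X = F.toMatrix fun i => x i) := fun X => by
    obtain ⟨G, hG⟩ := exists_singularFrame_toMatrix_eq X
    have hX := fun i : {i // singularValue X i ≠ 0} => singularValue_nonneg X i
    have hle := F.sum_prox_le_spectralLoss G hρ₀ hρ (fun i => (hpos i).le) hprox hX
    have heq := F.toMatrix_eq_toMatrix_of_spectralLoss_le G hρ₀ hρ hpos hprox hX
    rw [← hmin, hF, hG] at hle heq
    exact ⟨hle, fun h => (heq h).symm⟩
  exact ⟨_, fun X => (hstrict X).1, fun X hX => (hstrict X).2 (hX _)⟩

end SpectralPenalty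

theorem stmt6_general {m n : ℕ} {lam q τ : ℝ} (hlam : 0 < lam) (hq0 : 0 < q) (hq1 : q < 1)
    (hτ : τ = (1 - q / 2) * lam ^ (1 / (2 - q)) * (1 - q) ^ ((q - 1) / (2 - q)))
    (Mnat : Matrix (Fin m) (Fin n) ℝ) (hσ : ∀ i : Fin (min m n), singularValue Mnat i ≠ τ) :
    ∃! Mstar : Matrix (Fin m) (Fin n) ℝ, ∀ X : Matrix (Fin m) (Fin n) ℝ,
      frobNorm (Mnat - Mstar) ^ 2 + lam * schattenPow Mstar q ≤
        frobNorm (Mnat - X) ^ 2 + lam * schattenPow X q := by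
  simp only [schattenPow, Finset.mul_sum]
  refine existsUnique_forall_spectralLoss_le (ρ := fun t => lam * t ^ q) ?_ ?_ fun i => ?_
  · rw [Real.zero_rpow hq0.ne', mul_zero]
  · exact fun t ht => mul_nonneg hlam.le (Real.rpow_nonneg ht q)
  · exact exists_isStrictProx_of_ne_rpowThreshold hlam hq0 hq1 fun hi => hσ i (hi.trans hτ.symm)

/-- For `L ≥ 3`, `λ > 0`, `q = 2/L` and threshold
`τ = (1 − q/2)·λ^{1/(2−q)}·(1 − q)^{(q−1)/(2−q)}`: if no singular value of `M♮`
equals `τ`, then the Schatten-regularized objective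
`𝓛_{M♮}(M) = ‖M♮ − M‖_F² + λ‖M‖_{S^{2/L}}^{2/L}` has exactly one global
minimizer over `ℝ^{m×n}`. -/
theorem stmt6 (L : ℕ) (hL : 3 ≤ L) (lam : ℝ) (hlam : 0 < lam) (q τ : ℝ)
    (hq : q = 2 / L)
    (hτ : τ = (1 - q / 2) * lam ^ (1 / (2 - q)) * (1 - q) ^ ((q - 1) / (2 - q)))
    (m n : ℕ) (Mnat : Matrix (Fin m) (Fin n) ℝ)
    (hσ : ∀ i : Fin (min m n), singularValue Mnat i ≠ τ) :
    ∃! Mstar : Matrix (Fin m) (Fin n) ℝ,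
      ∀ X : Matrix (Fin m) (Fin n) ℝ,
        schattenLoss L lam Mnat Mstar ≤ schattenLoss L lam Mnat X := by
  have hL' : (3 : ℝ) ≤ L := by exact_mod_cast hL
  subst hq
  exact stmt6_general hlam (by positivity) (by rw [div_lt_one] <;> linarith) hτ Mnat hσ
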